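/- There exists a homeomorphism f of the open annulus 𝔸 = 𝕋¹ × ℝ which is irrotational, preserves a Borel probability measure of full support, and, denoting by f̌ its irrotational lift to ℝ², satisfies: (1) there is an open topological disk U ⊆ 𝔸 with π(Fix(f̌)) ⊆ U; (2) every connected component of Fix(f) is compact; (3) for every real number η > 0 and every integer j ≥ 1 there exist a point ž ∈ [0,η] × [j, j+1] ⊆ ℝ² and an integer n ≥ 1 such that f̌ⁿ(ž) ∈ [j, j+η] × [j, j+1]; (4) writing f(x,y) = (f₁(x,y), f₂(x,y)), one has f₂(x,y) → +∞ and dist_{𝕋¹}(f₁(x,y), x) → 0 as y → +∞, uniformly in x (that is, f extends continuously to 𝕋¹ × (−∞,+∞] as the identity on the circle 𝕋¹ × {+∞}). -/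

import Mathlib

open MeasureTheory Filter Topology Set

noncomputable section

/-- The circle `𝕋¹ = ℝ/ℤ`. -/
abbrev T1 : Type := AddCircle (1 : ℝ)

/-- The open annulus `𝔸 = 𝕋¹ × ℝ`. -/
abbrev Ann : Type := T1 × ℝ

/-- The universal covering map `π : ℝ² → 𝔸`, `π(x,y) = (x + ℤ, y)`. -/
def pA : ℝ × ℝ → Ann := fun z => ((z.1 : T1), z.2)

/-- An open topological disk of `𝔸`: a nonempty open connected simply connected subset. -/
def IsOpenTopDisk (U : Set Ann) : Prop :=
  IsOpen U ∧ IsConnected U ∧ SimplyConnectedSpace U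

/-- `f` is isotopic to the identity. -/
def IsotopicToId (f : Ann ≃ₜ Ann) : Prop :=
  ∃ H : ℝ × Ann → Ann, ContinuousOn H (Set.Icc (0:ℝ) 1 ×ˢ Set.univ) ∧
    (∀ z, H (0, z) = z) ∧ (∀ z, H (1, z) = f z) ∧
    ∀ t ∈ Set.Icc (0:ℝ) 1, ∃ g : Ann ≃ₜ Ann, ∀ z, H (t, z) = g z

/-- `μ` is an `f`-invariant Borel probability measure of full support. -/
def InvariantFullMeasure (f : Ann ≃ₜ Ann) (μ : Measure Ann) : Prop :=
  IsProbabilityMeasure μ ∧ Measure.map f μ = μ ∧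
    ∀ U : Set Ann, IsOpen U → U.Nonempty → 0 < μ U

/-- `fc` is a lift of `f` to the universal covering `ℝ²`. -/
def IsLift (f : Ann ≃ₜ Ann) (fc : (ℝ × ℝ) ≃ₜ (ℝ × ℝ)) : Prop :=
  ∀ z, pA (fc z) = f (pA z)

/-- The rotation set of `fc` relative to a compact set `K`. -/
def rotK (fc : (ℝ × ℝ) ≃ₜ (ℝ × ℝ)) (K : Set Ann) : Set EReal :=
  {ρ | ∃ (z : ℕ → ℝ × ℝ) (n : ℕ → ℕ), Tendsto n atTop atTop ∧
    (∀ k, pA (z k) ∈ K ∧ pA ((⇑fc)^[n k] (z k)) ∈ K) ∧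
    Tendsto (fun k => (((((⇑fc)^[n k] (z k)).1 - (z k).1) / (n k) : ℝ) : EReal))
      atTop (nhds ρ)}

/-- The rotation set of `fc`. -/
def rot (fc : (ℝ × ℝ) ≃ₜ (ℝ × ℝ)) : Set EReal :=
  closure (⋃ (K : Set Ann) (_ : IsCompact K), rotK fc K)

/-- Alternative `(1)` in Theorems A and B: existence of non-contractible
periodic points of arbitrarily large prime period. -/
def NonContractibleAlt (fc : (ℝ × ℝ) ≃ₜ (ℝ × ℝ)) : Prop :=
  ∃ q : ℕ, 1 ≤ q ∧ ∀ r s : ℕ, 0 < r → 0 < s → Nat.Coprime r s → (r : ℝ) / s ≤ 1 / q →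
    (∃ z : ℝ × ℝ, (⇑fc)^[s] z + ((r : ℝ), 0) = z) ∨
    (∃ z : ℝ × ℝ, (⇑fc)^[s] z - ((r : ℝ), 0) = z)

/-!
On `Circle × ℝ` let every point `(e, w)` move as a harmonic oscillator with position `w`, velocity
`Re e` and frequency `ω = Im e / √(1 + w²)`. The frequency is constant along orbits, so the formulas
for harmonic oscillation define a flow, and every point with `ω ≠ 0` is periodic. Averaging over
countably many periodic orbits with dense union gives an invariant measure of full support. The
direction `e` never becomes opposite to its initial value, so no orbit turns by more than half a
turn; the exceptional orbit `e = 1` climbs vertically at unit speed. The time-one map only fixes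
`(±i, 0)`.

The coordinate change `(x, y) ↦ (x - σ(y), κ(y))` straightens to that vertical orbit the curve
`x = σ(y)` of the annulus, which winds `j` times while the height goes from `j` to `j + 1/2`. The
horizontal displacement of an orbit segment is bounded by `1/2` plus the values of `|σ|` at its
ends, hence all rotation numbers over compact sets vanish. Since `κ` grows faster than `σ`
oscillates, the time-one map tends to the identity at the end `+∞`.
-/

section Flows

variable {τ X Y : Type*} [TopologicalSpace τ] [AddMonoid τ]
  [TopologicalSpace X] [TopologicalSpace Y]

/-- The flow on `X` that corresponds to the flow `ψ` on `Y` under the homeomorphism `K`. -/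
def conjFlow (K : X ≃ₜ Y) (ψ : Flow τ Y) : Flow τ X where
  toFun t z := K.symm (ψ t (K z))
  cont' := K.symm.continuous.comp
    (ψ.continuous continuous_fst (K.continuous.comp continuous_snd))
  map_add' s t z := by simp only [ψ.map_add, K.apply_symm_apply]
  map_zero' z := by simp only [ψ.map_zero_apply, K.symm_apply_apply]

theorem apply_conjFlow (K : X ≃ₜ Y) (ψ : Flow τ Y) (t : τ) (z : X) :
    K (conjFlow K ψ t z) = ψ t (K z) :=
  K.apply_symm_apply _

theorem conjFlow_eq_self_iff {K : X ≃ₜ Y} {ψ : Flow τ Y} {t : τ} {z : X} :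
    conjFlow K ψ t z = z ↔ ψ t (K z) = K z := by
  rw [← K.injective.eq_iff, apply_conjFlow]

variable (φ : Flow ℝ X)

theorem iterate_toHomeomorph_one (n : ℕ) (z : X) : (φ.toHomeomorph 1)^[n] z = φ n z := by
  induction n with
  | zero => simp only [Function.iterate_zero, id, Nat.cast_zero, φ.map_zero_apply]
  | succ n ih =>
    rw [Function.iterate_succ_apply', ih, Nat.cast_succ, add_comm, φ.map_add]
    rfl

theorem exists_orbit_param {T : ℝ} (hT : T ≠ 0) {z : X} (hz : φ T z = z) :
    ∃ γ : UnitAddCircle → X, Continuous γ ∧ γ 0 = z ∧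
      ∀ t θ, φ t (γ θ) = γ ((t / T : ℝ) + θ) := by
  have periodic : Function.Periodic (fun r : ℝ => φ (r * T) z) 1 := fun r => by
    simp only [add_mul, one_mul, φ.map_add, hz]
  have continuous_orbit : Continuous fun r : ℝ => φ (r * T) z :=
    φ.continuous (by fun_prop) continuous_const
  refine ⟨periodic.lift, continuous_coinduced_dom.2 continuous_orbit, ?_, fun t θ => ?_⟩
  · exact (periodic.lift_coe 0).trans (by rw [zero_mul, φ.map_zero_apply])
  · induction θ using QuotientAddGroup.induction_on with | _ r => ?_
    rw [← AddCircle.coe_add, periodic.lift_coe, periodic.lift_coe, ← φ.map_add, add_mul,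
      div_mul_cancel₀ t hT]

variable [MeasurableSpace X] [BorelSpace X]

theorem exists_invariant_measure_of_periodic {T : ℝ} (hT : T ≠ 0) {z : X} (hz : φ T z = z) :
    ∃ ν : Measure X, IsProbabilityMeasure ν ∧ (∀ t, ν.map (φ t) = ν) ∧
      ∀ U, IsOpen U → z ∈ U → 0 < ν U := by
  obtain ⟨γ, hγ, hγ_zero, hγ_flow⟩ := exists_orbit_param φ hT hz
  refine ⟨(AddCircle.haarAddCircle (T := 1)).map γ,
    Measure.isProbabilityMeasure_map hγ.aemeasurable, fun t => ?_, fun U hU hzU => ?_⟩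
  · have hφt : Measurable (φ t) := (φ.toHomeomorph t).measurable
    have rotate : φ t ∘ γ = γ ∘ (((t / T : ℝ) : UnitAddCircle) + ·) := funext (hγ_flow t)
    rw [Measure.map_map hφt hγ.measurable, rotate,
      ← Measure.map_map hγ.measurable (measurable_const_add _), map_add_left_eq_self]
  · rw [Measure.map_apply hγ.measurable hU.measurableSet]
    exact (hU.preimage hγ).measure_pos _ ⟨0, mem_preimage.2 (hγ_zero ▸ hzU)⟩

theorem exists_invariant_measure_of_dense_periodic [SecondCountableTopology X] [Nonempty X]
    (hφ : Dense {z | ∃ T ≠ 0, φ T z = z}) :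
    ∃ μ : Measure X, IsProbabilityMeasure μ ∧ (∀ t, μ.map (φ t) = μ) ∧
      ∀ U : Set X, IsOpen U → U.Nonempty → 0 < μ U := by
  obtain ⟨S, hS_sub, hS_countable, hS_dense⟩ := hφ.exists_countable_dense_subset
  obtain ⟨z, rfl⟩ := hS_countable.exists_eq_range hS_dense.nonempty
  have periodic : ∀ n, ∃ T ≠ 0, φ T (z n) = z n := fun n => hS_sub ⟨n, rfl⟩
  choose T hT hz using periodic
  choose ν hν_prob hν_inv hν_pos using fun n =>
    exists_invariant_measure_of_periodic φ (hT n) (hz n)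
  refine ⟨Measure.sum fun n => (2⁻¹ : ENNReal) ^ (n + 1) • ν n, ⟨?_⟩, fun t => ?_,
    fun U hU hne => ?_⟩
  · simp only [Measure.sum_apply _ MeasurableSet.univ, Measure.smul_apply, measure_univ,
      smul_eq_mul, mul_one]
    rw [ENNReal.tsum_geometric_add_one, ENNReal.one_sub_inv_two, inv_inv,
      ENNReal.inv_mul_cancel two_ne_zero ENNReal.ofNat_ne_top]
  · have hφt : Measurable (φ t) := (φ.toHomeomorph t).measurable
    rw [Measure.map_sum hφt.aemeasurable]
    simp only [Measure.map_smul, hν_inv]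
  · obtain ⟨_, hzU, n, rfl⟩ := hS_dense.inter_open_nonempty U hU hne
    rw [Measure.sum_apply _ hU.measurableSet]
    refine lt_of_lt_of_le ?_ (ENNReal.le_tsum n)
    exact ENNReal.mul_pos (pow_ne_zero _ (by simp)) (hν_pos n U hU hzU).ne'

end Flows

theorem isotopicToId_toHomeomorph (φ : Flow ℝ Ann) (t : ℝ) :
    IsotopicToId (φ.toHomeomorph t) :=
  ⟨fun q => φ (q.1 * t) q.2,
    (φ.continuous (continuous_fst.mul continuous_const) continuous_snd).continuousOn,
    fun z => by simp only [zero_mul, φ.map_zero_apply],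
    fun z => by simp only [one_mul]; rfl,
    fun s _ => ⟨φ.toHomeomorph (s * t), fun _ => rfl⟩⟩

@[fun_prop]
theorem continuous_pA : Continuous pA :=
  ((AddCircle.continuous_mk' 1).comp continuous_fst).prodMk continuous_snd

theorem surjective_pA : Function.Surjective pA := fun z => by
  obtain ⟨x, hx⟩ := QuotientAddGroup.mk_surjective z.1
  exact ⟨(x, z.2), Prod.ext hx rfl⟩

theorem pA_iterate {f : Ann ≃ₜ Ann} {fc : (ℝ × ℝ) ≃ₜ (ℝ × ℝ)} (h : IsLift f fc) (n : ℕ)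
    (z : ℝ × ℝ) : pA (fc^[n] z) = f^[n] (pA z) :=
  Function.Semiconj.iterate_right h n z

/-- `D t z` is a continuous choice of the angle through which the flow `φ` has carried `z` at
time `t`, as a real number rather than an element of `𝕋¹`. -/
structure IsDisplacement (φ : Flow ℝ Ann) (D : ℝ → Ann → ℝ) : Prop where
  continuous : Continuous (Function.uncurry D)
  zero (z : Ann) : D 0 z = 0
  fst_eq (t : ℝ) (z : Ann) : (φ t z).1 = z.1 + (D t z : T1)

namespace IsDisplacement

variable {φ : Flow ℝ Ann} {D : ℝ → Ann → ℝ}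

theorem add (h : IsDisplacement φ D) (s t : ℝ) (z : Ann) :
    D (s + t) z = D s (φ t z) + D t z := by
  have hD (w : Ann) : Continuous fun r => D r w := h.continuous.comp (.prodMk_left w)
  have same_class : ((↑) : ℝ → T1) ∘ (fun r => D (r + t) z) =
      ((↑) : ℝ → T1) ∘ fun r => D r (φ t z) + D t z := by
    funext r
    have := h.fst_eq (r + t) z
    rw [φ.map_add, h.fst_eq r, h.fst_eq t, add_assoc] at this
    simpa only [Function.comp_apply, AddCircle.coe_add, add_comm (D t z : T1)]
      using (add_left_cancel this).symm
  refine congrFun ((AddCircle.isCoveringMap_coe (1 : ℝ)).eq_of_comp_eq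
    ((hD z).comp (continuous_add_const t)) ((hD _).add_const _) same_class 0 ?_) s
  simp only [Function.comp_apply, zero_add, h.zero]

theorem dist_fst_le (h : IsDisplacement φ D) (t : ℝ) (z : Ann) :
    dist (φ t z).1 z.1 ≤ |D t z| := by
  rw [h.fst_eq, dist_self_add_left]
  exact QuotientAddGroup.norm_mk_le_norm

/-- The lift to the plane of a flow of the annulus, determined by a displacement function. -/
def liftFlow (h : IsDisplacement φ D) : Flow ℝ (ℝ × ℝ) where
  toFun t z := (z.1 + D t (pA z), (φ t (pA z)).2)
  cont' := by
    have hD : Continuous fun q : ℝ × ℝ × ℝ => D q.1 (pA q.2) :=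
      h.continuous.comp (continuous_fst.prodMk (continuous_pA.comp continuous_snd))
    exact (continuous_snd.fst.add hD).prodMk
      (φ.continuous continuous_fst (by fun_prop)).snd
  map_add' s t z := by
    have hpA : pA (z.1 + D t (pA z), (φ t (pA z)).2) = φ t (pA z) :=
      Prod.ext (h.fst_eq t (pA z)).symm rfl
    rw [hpA, h.add, φ.map_add]
    exact Prod.ext (by ring) rfl
  map_zero' z := by
    rw [h.zero, φ.map_zero_apply, add_zero]
    rfl

theorem liftFlow_apply (h : IsDisplacement φ D) (t : ℝ) (z : ℝ × ℝ) :
    h.liftFlow t z = (z.1 + D t (pA z), (φ t (pA z)).2) :=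
  rfl

theorem isLift_liftFlow (h : IsDisplacement φ D) (t : ℝ) :
    IsLift (φ.toHomeomorph t) (h.liftFlow.toHomeomorph t) :=
  fun z => Prod.ext (h.fst_eq t (pA z)).symm rfl

end IsDisplacement

theorem tendsto_coe_div_natCast_of_abs_le {u : ℕ → ℝ} {n : ℕ → ℕ} {C : ℝ}
    (hn : Tendsto n atTop atTop) (hu : ∀ k, |u k| ≤ C) :
    Tendsto (fun k => ((u k / n k : ℝ) : EReal)) atTop (𝓝 0) := by
  refine (continuous_coe_real_ereal.tendsto 0).comp (squeeze_zero_norm (fun k => ?_)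
    ((tendsto_const_nhds (x := C)).div_atTop (tendsto_natCast_atTop_atTop.comp hn)))
  rw [Real.norm_eq_abs, abs_div, Nat.abs_cast]
  exact div_le_div_of_nonneg_right (hu k) (Nat.cast_nonneg _)

section Rotation

variable {f : Ann ≃ₜ Ann} {fc : (ℝ × ℝ) ≃ₜ (ℝ × ℝ)} {b : Ann → ℝ}

theorem eq_zero_of_mem_rotK (hb : Continuous b)
    (hfc : ∀ n z, |(fc^[n] z).1 - z.1| ≤ b (pA z) + b (pA (fc^[n] z)))
    {K : Set Ann} (hK : IsCompact K) {ρ : EReal} (hρ : ρ ∈ rotK fc K) : ρ = 0 := by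
  obtain ⟨z, n, hn, hmem, hlim⟩ := hρ
  obtain ⟨C, hC⟩ := (hK.image hb).bddAbove
  refine tendsto_nhds_unique hlim (tendsto_coe_div_natCast_of_abs_le (C := C + C) hn fun k => ?_)
  exact (hfc (n k) (z k)).trans
    (add_le_add (hC (mem_image_of_mem b (hmem k).1)) (hC (mem_image_of_mem b (hmem k).2)))

theorem zero_mem_rotK_singleton
    (hfc : ∀ n z, |(fc^[n] z).1 - z.1| ≤ b (pA z) + b (pA (fc^[n] z)))
    (hlift : IsLift f fc) {w : Ann} (hw : f w = w) : 0 ∈ rotK fc {w} := by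
  obtain ⟨z, rfl⟩ := surjective_pA w
  have orbit (n : ℕ) : pA (fc^[n] z) = pA z := by
    rw [pA_iterate hlift, Function.iterate_fixed hw]
  exact ⟨fun _ => z, id, tendsto_id, fun n => ⟨rfl, orbit n⟩,
    tendsto_coe_div_natCast_of_abs_le tendsto_id fun n => orbit n ▸ hfc n z⟩

theorem rot_eq_zero (hb : Continuous b)
    (hfc : ∀ n z, |(fc^[n] z).1 - z.1| ≤ b (pA z) + b (pA (fc^[n] z)))
    (hlift : IsLift f fc) (hfix : (Function.fixedPoints f).Nonempty) : rot fc = {0} := by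
  obtain ⟨w, hw⟩ := hfix
  have union_eq : ⋃ (K : Set Ann) (_ : IsCompact K), rotK fc K = {0} := by
    refine Subset.antisymm (iUnion₂_subset fun K hK ρ hρ => eq_zero_of_mem_rotK hb hfc hK hρ) ?_
    rw [singleton_subset_iff]
    exact mem_iUnion₂_of_mem isCompact_singleton (zero_mem_rotK_singleton hfc hlift hw)
  rw [rot, union_eq, closure_singleton]

end Rotation

theorem isOpenTopDisk_compl_zero_prod_univ : IsOpenTopDisk ({0}ᶜ ×ˢ univ) := by
  have : ContractibleSpace (Ioo (0 : ℝ) (0 + 1)) :=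
    (convex_Ioo _ _).contractibleSpace ⟨1 / 2, by norm_num⟩
  have interval_homeo : Ioo (0 : ℝ) (0 + 1) ≃ₜ ({0}ᶜ : Set T1) :=
    (AddCircle.openPartialHomeomorphCoe (1 : ℝ) 0).toHomeomorphSourceTarget
  have : ContractibleSpace (({0}ᶜ ×ˢ univ : Set Ann)) :=
    ((Homeomorph.Set.prod _ _).trans
      (interval_homeo.symm.prodCongr (Homeomorph.Set.univ ℝ))).contractibleSpace
  exact ⟨isOpen_compl_singleton.prod isOpen_univ,
    isConnected_iff_connectedSpace.2 inferInstance, inferInstance⟩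

theorem isCompact_connectedComponentIn {X : Type*} [TopologicalSpace X] {F : Set X}
    (hF : IsCompact F) {x : X} (hx : x ∈ F) : IsCompact (connectedComponentIn F x) := by
  have := isCompact_iff_compactSpace.1 hF
  rw [connectedComponentIn_eq_image hx]
  exact isClosed_connectedComponent.isCompact.image continuous_subtype_val

theorem exists_forall_of_eventually_comap_snd {α : Type*} {P : α × ℝ → Prop}
    (h : ∀ᶠ z in comap Prod.snd atTop, P z) : ∃ Y : ℝ, ∀ z : α × ℝ, Y ≤ z.2 → P z := by
  obtain ⟨Y, hY⟩ := eventually_atTop.1 (eventually_comap.1 h)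
  exact ⟨Y, fun z hz => hY z.2 hz z rfl⟩

/-- The solution `s` of `s'' = -ω² s`, `s 0 = 0`, `s' 0 = 1`, that is, `sin (ω t) / ω`, read as `t`
for `ω = 0`. -/
def sinDiv (ω t : ℝ) : ℝ := t * Real.sinc (ω * t)

theorem mul_sinDiv (ω t : ℝ) : ω * sinDiv ω t = Real.sin (ω * t) := by
  rcases eq_or_ne (ω * t) 0 with h | h
  · rw [sinDiv, ← mul_assoc, h, zero_mul, Real.sin_zero]
  · rw [sinDiv, Real.sinc_of_ne_zero h]
    field_simp [left_ne_zero_of_mul h, right_ne_zero_of_mul h]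

theorem sinDiv_zero_left (t : ℝ) : sinDiv 0 t = t := by
  rw [sinDiv, zero_mul, Real.sinc_zero, mul_one]

theorem sinDiv_add (ω s t : ℝ) :
    sinDiv ω (s + t) = sinDiv ω t * Real.cos (ω * s) + Real.cos (ω * t) * sinDiv ω s := by
  rcases eq_or_ne ω 0 with rfl | hω
  · simp only [sinDiv_zero_left, zero_mul, Real.cos_zero, mul_one, one_mul, add_comm]
  · apply mul_left_cancel₀ hω
    rw [mul_sinDiv, mul_add, mul_add, Real.sin_add, ← mul_sinDiv, ← mul_sinDiv]
    ring

/-- The frequency of the oscillator through a point of `Circle × ℝ`, a first integral of its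
flow. -/
def frequency (z : Circle × ℝ) : ℝ := (z.1 : ℂ).im / √(1 + z.2 ^ 2)

/-- Velocity and rescaled position of the oscillator, as a complex number that rotates at speed
`frequency z`. -/
def phase (z : Circle × ℝ) : ℂ := ⟨(z.1 : ℂ).re, frequency z * z.2⟩

/-- The position at time `t` of the oscillator `w'' = -ω² w`, `ω = frequency z`, started with
position `z.2` and velocity `Re z.1`. -/
def height (t : ℝ) (z : Circle × ℝ) : ℝ :=
  z.2 * Real.cos (frequency z * t) + (z.1 : ℂ).re * sinDiv (frequency z) t

/-- The velocity of the oscillator whose position is `height t z`. -/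
def velocity (t : ℝ) (z : Circle × ℝ) : ℝ :=
  (z.1 : ℂ).re * Real.cos (frequency z * t) - frequency z * z.2 * Real.sin (frequency z * t)

section Oscillator

variable (s t : ℝ) (z : Circle × ℝ)

theorem re_sq_add_im_sq (c : Circle) : (c : ℂ).re ^ 2 + (c : ℂ).im ^ 2 = 1 := by
  rw [pow_two, pow_two, ← Complex.normSq_apply, Circle.normSq_coe]

theorem sqrt_one_add_sq_pos (w : ℝ) : 0 < √(1 + w ^ 2) := Real.sqrt_pos.2 (by positivity)

theorem frequency_mul_sqrt : frequency z * √(1 + z.2 ^ 2) = (z.1 : ℂ).im :=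
  div_mul_cancel₀ _ (sqrt_one_add_sq_pos _).ne'

theorem frequency_eq_zero_iff : frequency z = 0 ↔ (z.1 : ℂ).im = 0 := by
  rw [← frequency_mul_sqrt, mul_eq_zero, or_iff_left (sqrt_one_add_sq_pos _).ne']

theorem re_sq_add_frequency_sq : (z.1 : ℂ).re ^ 2 + frequency z ^ 2 * (1 + z.2 ^ 2) = 1 := by
  rw [← Real.sq_sqrt (by positivity : 0 ≤ 1 + z.2 ^ 2), ← mul_pow, frequency_mul_sqrt,
    re_sq_add_im_sq]

theorem velocity_add_frequency_mul_height :
    (⟨velocity t z, frequency z * height t z⟩ : ℂ) =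
      Complex.exp ((frequency z * t : ℝ) * Complex.I) * phase z := by
  apply Complex.ext <;>
    simp only [Complex.mul_re, Complex.mul_im, Complex.exp_ofReal_mul_I_re,
      Complex.exp_ofReal_mul_I_im, phase, velocity, height]
  · ring
  · rw [mul_add, mul_left_comm _ _ (sinDiv _ _), mul_sinDiv]
    ring

theorem velocity_sq_add_height_sq :
    velocity t z ^ 2 + (frequency z * height t z) ^ 2 =
      (z.1 : ℂ).re ^ 2 + (frequency z * z.2) ^ 2 := by
  have := congrArg Complex.normSq (velocity_add_frequency_mul_height t z)
  rwa [map_mul, Complex.normSq_eq_norm_sq (Complex.exp _), Complex.norm_exp_ofReal_mul_I,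
    one_pow, one_mul, phase, Complex.normSq_mk, Complex.normSq_mk, ← pow_two, ← pow_two,
    ← pow_two, ← pow_two] at this

theorem norm_velocity_add_frequency_mul_sqrt :
    ‖(⟨velocity t z, frequency z * √(1 + height t z ^ 2)⟩ : ℂ)‖ = 1 := by
  rw [Complex.norm_def, Real.sqrt_eq_one, Complex.normSq_mk]
  have hsqrt := Real.sq_sqrt (by positivity : 0 ≤ 1 + height t z ^ 2)
  linear_combination velocity_sq_add_height_sq t z + frequency z ^ 2 * hsqrt +
    re_sq_add_frequency_sq z

/-- The angular coordinate of the oscillator at time `t`: its real part is the velocity, and its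
imaginary part is forced by the conservation of `frequency`. -/
def direction : Circle :=
  ⟨⟨velocity t z, frequency z * √(1 + height t z ^ 2)⟩,
    mem_sphere_zero_iff_norm.2 (norm_velocity_add_frequency_mul_sqrt t z)⟩

theorem direction_re : (direction t z : ℂ).re = velocity t z := rfl

theorem direction_im : (direction t z : ℂ).im = frequency z * √(1 + height t z ^ 2) := rfl

theorem frequency_direction_height :
    frequency (direction t z, height t z) = frequency z :=
  mul_div_cancel_right₀ _ (sqrt_one_add_sq_pos _).ne'

theorem phase_direction_height :
    phase (direction t z, height t z) =
      Complex.exp ((frequency z * t : ℝ) * Complex.I) * phase z := by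
  rw [← velocity_add_frequency_mul_height, phase, frequency_direction_height, direction_re]

variable {z} in
theorem ext_of_frequency {z' : Circle × ℝ} (hfreq : frequency z = frequency z')
    (hre : (z.1 : ℂ).re = (z'.1 : ℂ).re) (hsnd : z.2 = z'.2) : z = z' := by
  refine Prod.ext (Circle.ext (Complex.ext hre ?_)) hsnd
  rw [← frequency_mul_sqrt, ← frequency_mul_sqrt, hfreq, hsnd]

theorem height_add :
    height (s + t) z = height s (direction t z, height t z) := by
  rw [height.eq_def s, frequency_direction_height, direction_re, height, height, velocity,
    sinDiv_add, mul_add, Real.cos_add, ← mul_sinDiv _ s]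
  ring

theorem velocity_add :
    velocity (s + t) z = velocity s (direction t z, height t z) := by
  have hphase (r : ℝ) (w : Circle × ℝ) : velocity r w = (Complex.exp
      ((frequency w * r : ℝ) * Complex.I) * phase w).re :=
    congrArg Complex.re (velocity_add_frequency_mul_height r w)
  rw [hphase, hphase, phase_direction_height, frequency_direction_height, ← mul_assoc,
    ← Complex.exp_add, ← add_mul, ← Complex.ofReal_add, ← mul_add]

@[fun_prop]
theorem continuous_frequency : Continuous frequency :=
  (Complex.continuous_im.comp (continuous_subtype_val.comp continuous_fst)).div (by fun_prop)
    fun z => (sqrt_one_add_sq_pos z.2).ne'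

@[fun_prop]
theorem continuous_height : Continuous fun q : ℝ × Circle × ℝ => height q.1 q.2 := by
  have := Real.continuous_sinc
  unfold height sinDiv
  fun_prop

@[fun_prop]
theorem continuous_velocity : Continuous fun q : ℝ × Circle × ℝ => velocity q.1 q.2 := by
  unfold velocity
  fun_prop

@[fun_prop]
theorem continuous_direction : Continuous fun q : ℝ × Circle × ℝ => direction q.1 q.2 := by
  refine Continuous.subtype_mk ?_ _
  have := Complex.equivRealProdCLM.symm.continuous
  exact this.comp (continuous_velocity.prodMk (by fun_prop))

/-- The flow `w' = Re e`, `(Re e)' = -ω² w` of points `(e, w)`, where `ω = frequency (e, w)`. -/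
def oscillatorFlow : Flow ℝ (Circle × ℝ) where
  toFun t z := (direction t z, height t z)
  cont' := continuous_direction.prodMk continuous_height
  map_add' s t z := ext_of_frequency (by simp only [frequency_direction_height])
    (velocity_add s t z) (height_add s t z)
  map_zero' z := ext_of_frequency (frequency_direction_height 0 z)
    (by simp only [direction_re, velocity, mul_zero, Real.cos_zero, Real.sin_zero]; ring)
    (by simp only [height, sinDiv, mul_zero, zero_mul, Real.cos_zero]; ring)

theorem oscillatorFlow_apply : oscillatorFlow t z = (direction t z, height t z) := rfl

theorem oscillatorFlow_period {z : Circle × ℝ} (hz : frequency z ≠ 0) :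
    oscillatorFlow (2 * Real.pi / frequency z) z = z := by
  have hangle : frequency z * (2 * Real.pi / frequency z) = 2 * Real.pi :=
    mul_div_cancel₀ _ hz
  have hsin : sinDiv (frequency z) (2 * Real.pi / frequency z) = 0 := by
    apply mul_left_cancel₀ hz
    rw [mul_sinDiv, hangle, Real.sin_two_pi, mul_zero]
  refine ext_of_frequency (frequency_direction_height _ z) ?_ ?_
  · rw [oscillatorFlow_apply, direction_re, velocity, hangle, Real.cos_two_pi,
      Real.sin_two_pi, mul_one, mul_zero, sub_zero]
  · rw [oscillatorFlow_apply, height, hangle, hsin, Real.cos_two_pi, mul_one, mul_zero,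
      add_zero]

theorem dense_im_ne_zero : Dense {c : Circle | (c : ℂ).im ≠ 0} := by
  have hsin : Dense {θ : ℝ | Real.sin θ ≠ 0} := by
    refine Set.Countable.dense_compl ℝ ((countable_range fun n : ℤ => n * Real.pi).mono ?_)
    exact fun θ hθ => Real.sin_eq_zero_iff.1 hθ
  have hexp : DenseRange Circle.exp :=
    Function.Surjective.denseRange fun c => ⟨_, Circle.exp_arg c⟩
  refine (hexp.dense_image Circle.exp.continuous hsin).mono ?_
  rintro _ ⟨θ, hθ, rfl⟩
  rwa [mem_ofPred_eq, Circle.coe_exp, Complex.exp_ofReal_mul_I_im]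

theorem dense_periodic_oscillatorFlow :
    Dense {z | ∃ T ≠ 0, oscillatorFlow T z = z} := by
  refine (dense_im_ne_zero.preimage isOpenMap_fst).mono fun z hz => ?_
  have hfreq : frequency z ≠ 0 := mt (frequency_eq_zero_iff z).1 hz
  exact ⟨_, div_ne_zero Real.two_pi_pos.ne' hfreq, oscillatorFlow_period hfreq⟩

theorem abs_re_le_one (c : Circle) : |(c : ℂ).re| ≤ 1 :=
  (Complex.abs_re_le_norm _).trans_eq (Circle.norm_coe c)

theorem abs_frequency_le_one : |frequency z| ≤ 1 := by
  rw [← sq_le_one_iff_abs_le_one]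
  nlinarith [re_sq_add_frequency_sq z, sq_nonneg (frequency z * z.2), sq_nonneg (z.1 : ℂ).re]

theorem abs_frequency_mul_snd_le_one : |frequency z * z.2| ≤ 1 := by
  rw [← sq_le_one_iff_abs_le_one]
  nlinarith [re_sq_add_frequency_sq z, sq_nonneg (frequency z), sq_nonneg (z.1 : ℂ).re]

theorem re_ne_zero_of_frequency_eq_zero {z : Circle × ℝ} (hz : frequency z = 0) :
    (z.1 : ℂ).re ≠ 0 := fun hre => by
  simpa [hz, hre] using re_sq_add_frequency_sq z

theorem frequency_ne_zero_of_oscillatorFlow_eq_self {t : ℝ} {z : Circle × ℝ} (ht : t ≠ 0)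
    (h : oscillatorFlow t z = z) : frequency z ≠ 0 := fun hz => by
  have hheight : height t z = z.2 := congrArg Prod.snd h
  rw [height, hz, zero_mul, Real.cos_zero, mul_one, sinDiv_zero_left, add_eq_left,
    mul_eq_zero, or_iff_left ht] at hheight
  exact re_ne_zero_of_frequency_eq_zero hz hheight

theorem oscillatorFlow_eq_self_of_re_eq_zero {z : Circle × ℝ} (hre : (z.1 : ℂ).re = 0)
    (hz : z.2 = 0) : oscillatorFlow t z = z :=
  ext_of_frequency (frequency_direction_height t z)
    (by simp only [oscillatorFlow_apply, direction_re, velocity, hre, hz]; ring)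
    (by simp only [oscillatorFlow_apply, height, hre, hz]; ring)

theorem oscillatorFlow_one_eq_self_iff {z : Circle × ℝ} :
    oscillatorFlow 1 z = z ↔ (z.1 : ℂ).re = 0 ∧ z.2 = 0 := by
  refine ⟨fun h => ?_, fun h => oscillatorFlow_eq_self_of_re_eq_zero 1 h.1 h.2⟩
  have hfreq := frequency_ne_zero_of_oscillatorFlow_eq_self one_ne_zero h
  have hexp : Complex.exp ((frequency z * 1 : ℝ) * Complex.I) ≠ 1 := fun hexp => by
    have hcos := congrArg Complex.re hexp
    rw [Complex.exp_ofReal_mul_I_re, mul_one, Complex.one_re] at hcos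
    have hle := abs_le.1 (abs_frequency_le_one z)
    have hpi := Real.pi_gt_three
    exact hfreq ((Real.cos_eq_one_iff_of_lt_of_lt (by linarith) (by linarith)).1 hcos)
  have hphase : phase z = 0 := by
    have := phase_direction_height 1 z
    rw [← oscillatorFlow_apply, h] at this
    exact (mul_eq_zero.1 ((sub_one_mul _ _).trans (sub_eq_zero.2 this.symm))).resolve_left
      (sub_ne_zero.2 hexp)
  exact ⟨congrArg Complex.re hphase,
    (mul_eq_zero.1 (congrArg Complex.im hphase)).resolve_left hfreq⟩

theorem oscillatorFlow_one_left (w : ℝ) :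
    oscillatorFlow t (1, w) = (1, w + t) := by
  have hfreq (v : ℝ) : frequency (1, v) = 0 := (frequency_eq_zero_iff _).2 Complex.one_im
  refine ext_of_frequency ?_ ?_ ?_
  · exact (frequency_direction_height _ _).trans ((hfreq w).trans (hfreq _).symm)
  · simp [oscillatorFlow_apply, direction_re, velocity, hfreq]
  · simp [oscillatorFlow_apply, height, hfreq, sinDiv_zero_left]

theorem direction_ne_neg : direction t z ≠ -z.1 := fun h => by
  have hre : velocity t z = -(z.1 : ℂ).re := congrArg (fun c : Circle => (c : ℂ).re) h
  have him : frequency z * √(1 + height t z ^ 2) = -(z.1 : ℂ).im :=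
    congrArg (fun c : Circle => (c : ℂ).im) h
  have hfreq : frequency z = 0 := by
    rw [← frequency_mul_sqrt, eq_neg_iff_add_eq_zero, ← mul_add, mul_eq_zero] at him
    exact him.resolve_right (add_pos (sqrt_one_add_sq_pos _) (sqrt_one_add_sq_pos _)).ne'
  rw [velocity, hfreq, zero_mul, zero_mul, zero_mul, Real.cos_zero] at hre
  exact re_ne_zero_of_frequency_eq_zero hfreq (by linarith)

/-- The angle in `[-1/2, 1/2]`, measured in full turns, from the initial direction to the
direction at time `t`. -/
def turning : ℝ := Complex.arg (direction t z / z.1 : Circle) / (2 * Real.pi)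

theorem toCircle_turning :
    AddCircle.toCircle ((turning t z : ℝ) : T1) = direction t z / z.1 := by
  rw [AddCircle.toCircle_apply_mk, turning, div_one, mul_div_cancel₀ _ Real.two_pi_pos.ne',
    Circle.exp_arg]

theorem turning_eq_zero {t : ℝ} {z : Circle × ℝ} (h : direction t z = z.1) : turning t z = 0 := by
  rw [turning, h, div_self', Circle.coe_one, Complex.arg_one, zero_div]

theorem abs_turning_le : |turning t z| ≤ 1 / 2 := by
  rw [turning, abs_div, abs_of_pos Real.two_pi_pos, div_le_iff₀ Real.two_pi_pos]
  linarith [Complex.abs_arg_le_pi (direction t z / z.1 : Circle)]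

theorem direction_div_mem_slitPlane :
    ((direction t z / z.1 : Circle) : ℂ) ∈ Complex.slitPlane := by
  refine Complex.mem_slitPlane_iff_arg.2
    ⟨fun harg => direction_ne_neg t z ?_, Circle.coe_ne_zero _⟩
  have hneg : direction t z / z.1 = -1 := by
    rw [← Circle.exp_arg (direction t z / z.1), harg]
    exact Circle.ext (by rw [Circle.coe_exp, Complex.exp_pi_mul_I]; rfl)
  rw [← neg_one_mul, ← hneg, div_mul_cancel]

@[fun_prop]
theorem continuous_turning : Continuous fun q : ℝ × Circle × ℝ => turning q.1 q.2 := by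
  have hquot : Continuous fun q : ℝ × Circle × ℝ => direction q.1 q.2 / q.2.1 := by
    fun_prop
  refine continuous_iff_continuousAt.2 fun q => ContinuousAt.div_const ?_ _
  exact (Complex.continuousAt_arg (direction_div_mem_slitPlane q.1 q.2)).comp_of_eq
    (continuous_subtype_val.comp hquot).continuousAt rfl

theorem abs_cos_sub_one_le (x : ℝ) : |Real.cos x - 1| ≤ x ^ 2 / 2 := by
  rw [abs_sub_comm, abs_of_nonneg (sub_nonneg.2 (Real.cos_le_one x))]
  linarith [Real.one_sub_sq_div_two_le_cos (x := x)]

theorem abs_sqrt_one_add_sq_sub_le (a b : ℝ) :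
    |√(1 + a ^ 2) - √(1 + b ^ 2)| ≤ |a - b| := by
  have hnorm (x : ℝ) : ‖(⟨1, x⟩ : ℂ)‖ = √(1 + x ^ 2) := by
    rw [Complex.norm_def, Complex.normSq_mk, one_mul, ← pow_two]
  have hsub : (⟨1, a⟩ - ⟨1, b⟩ : ℂ) = (a - b : ℝ) * Complex.I := by
    apply Complex.ext <;> simp
  have := abs_norm_sub_norm_le (⟨1, a⟩ : ℂ) ⟨1, b⟩
  rwa [hnorm, hnorm, hsub, norm_mul, Complex.norm_I, mul_one, Complex.norm_real,
    Real.norm_eq_abs] at this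

theorem abs_height_one_sub_le : |height 1 z - z.2| ≤ 2 := by
  have hsplit : height 1 z - z.2 =
      z.2 * (Real.cos (frequency z) - 1) + (z.1 : ℂ).re * Real.sinc (frequency z) := by
    rw [height, sinDiv, mul_one, one_mul]
    ring
  have hcos : |z.2 * (Real.cos (frequency z) - 1)| ≤ 1 := by
    calc |z.2 * (Real.cos (frequency z) - 1)|
        ≤ |z.2| * (frequency z ^ 2 / 2) := by
          rw [abs_mul]
          exact mul_le_mul_of_nonneg_left (abs_cos_sub_one_le _) (abs_nonneg _)
      _ = |frequency z * z.2| * |frequency z| / 2 := by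
          rw [abs_mul, ← sq_abs (frequency z)]
          ring
      _ ≤ 1 * 1 / 2 := by
          gcongr
          exacts [abs_frequency_mul_snd_le_one z, abs_frequency_le_one z]
      _ ≤ 1 := by norm_num
  have hsinc : |(z.1 : ℂ).re * Real.sinc (frequency z)| ≤ 1 := by
    rw [abs_mul]
    exact mul_le_one₀ (abs_re_le_one _) (abs_nonneg _) (Real.abs_sinc_le_one _)
  rw [hsplit]
  exact (abs_add_le _ _).trans (by linarith)

theorem abs_velocity_one_sub_le : |velocity 1 z - (z.1 : ℂ).re| ≤ 2 * |frequency z| := by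
  have hsplit : velocity 1 z - (z.1 : ℂ).re =
      (z.1 : ℂ).re * (Real.cos (frequency z) - 1) -
        frequency z * z.2 * Real.sin (frequency z) := by
    rw [velocity, mul_one]
    ring
  have hcos : |(z.1 : ℂ).re * (Real.cos (frequency z) - 1)| ≤ |frequency z| := by
    calc |(z.1 : ℂ).re * (Real.cos (frequency z) - 1)|
        ≤ 1 * (frequency z ^ 2 / 2) := by
          rw [abs_mul]
          gcongr
          exacts [abs_re_le_one _, abs_cos_sub_one_le _]
      _ ≤ |frequency z| := by
          nlinarith [abs_frequency_le_one z, abs_nonneg (frequency z), sq_abs (frequency z)]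
  have hsin : |frequency z * z.2 * Real.sin (frequency z)| ≤ |frequency z| := by
    rw [abs_mul]
    exact (mul_le_mul (abs_frequency_mul_snd_le_one z) Real.abs_sin_le_abs (abs_nonneg _)
      zero_le_one).trans_eq (one_mul _)
  rw [hsplit]
  exact (abs_sub _ _).trans (by linarith)

theorem norm_direction_one_sub_le : ‖(direction 1 z : ℂ) - z.1‖ ≤ 4 * |frequency z| := by
  have him : |frequency z * √(1 + height 1 z ^ 2) - (z.1 : ℂ).im| ≤ |frequency z| * 2 := by
    rw [← frequency_mul_sqrt, ← mul_sub, abs_mul]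
    exact mul_le_mul_of_nonneg_left
      ((abs_sqrt_one_add_sq_sub_le _ _).trans (abs_height_one_sub_le z)) (abs_nonneg _)
  refine (Complex.norm_le_abs_re_add_abs_im _).trans ?_
  rw [Complex.sub_re, Complex.sub_im, direction_re, direction_im]
  linarith [abs_velocity_one_sub_le z]

theorem tendsto_frequency_top :
    Tendsto frequency (comap Prod.snd atTop) (𝓝 0) := by
  have hsnd : Tendsto (fun z : Circle × ℝ => z.2⁻¹) (comap Prod.snd atTop) (𝓝 0) :=
    tendsto_inv_atTop_zero.comp tendsto_comap
  refine squeeze_zero_norm' ?_ hsnd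
  filter_upwards [tendsto_comap.eventually (eventually_gt_atTop 0)] with z hz
  have := abs_frequency_mul_snd_le_one z
  rwa [abs_mul, abs_of_pos hz, ← le_div_iff₀ hz, one_div] at this

theorem tendsto_turning_one_top :
    Tendsto (turning 1) (comap Prod.snd atTop) (𝓝 0) := by
  have hquot : Tendsto (fun z : Circle × ℝ => ((direction 1 z / z.1 : Circle) : ℂ))
      (comap Prod.snd atTop) (𝓝 1) := by
    rw [tendsto_iff_norm_sub_tendsto_zero]
    refine squeeze_zero (fun _ => norm_nonneg _) (fun z => ?_)
      (by simpa using tendsto_frequency_top.abs.const_mul 4)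
    have hnorm : ‖((direction 1 z / z.1 : Circle) : ℂ) - 1‖ =
        ‖(direction 1 z : ℂ) - z.1‖ := by
      rw [Circle.coe_div, div_sub_one (Circle.coe_ne_zero _), norm_div, Circle.norm_coe, div_one]
    exact hnorm.trans_le (norm_direction_one_sub_le z)
  have harg := ((Complex.continuousAt_arg Complex.one_mem_slitPlane).tendsto.comp
    hquot).div_const (2 * Real.pi)
  rwa [Complex.arg_one, zero_div] at harg

end Oscillator

theorem strictMono_eight_mul_cube : StrictMono fun y : ℝ => 8 * y ^ 3 :=
  (Odd.strictMono_pow (by decide)).const_mul (by norm_num)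

theorem surjective_eight_mul_cube : Function.Surjective fun y : ℝ => 8 * y ^ 3 := fun w => by
  have hcube : |w| ≤ 8 * (1 + |w|) ^ 3 := by
    nlinarith [abs_nonneg w, pow_nonneg (abs_nonneg w) 2, pow_nonneg (abs_nonneg w) 3]
  refine mem_range_of_exists_le_of_exists_ge (by fun_prop) ⟨-(1 + |w|), ?_⟩ ⟨1 + |w|, ?_⟩
  · linarith [neg_abs_le w, Odd.neg_pow (by decide : Odd 3) (1 + |w|)]
  · exact (le_abs_self w).trans hcube

/-- The rescaling `κ` of heights. Its growth makes bounded vertical steps of the oscillator small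
near the end `+∞` of the annulus, and the factor `8` makes `κ` integral on half-integers. -/
def rescale : ℝ ≃o ℝ :=
  strictMono_eight_mul_cube.orderIsoOfSurjective _ surjective_eight_mul_cube

theorem rescale_apply (y : ℝ) : rescale y = 8 * y ^ 3 := rfl

theorem rescale_natCast_add_half (j : ℕ) :
    rescale (j + 1 / 2) = rescale j + (12 * j ^ 2 + 6 * j + 1 : ℕ) := by
  push_cast [rescale_apply]
  ring

theorem sq_mul_abs_sub_le_abs_rescale_sub (a b : ℝ) :
    6 * a ^ 2 * |b - a| ≤ |rescale b - rescale a| := by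
  have hfactor : rescale b - rescale a = 8 * (b ^ 2 + a * b + a ^ 2) * (b - a) := by
    simp only [rescale_apply]
    ring
  rw [hfactor, abs_mul]
  refine mul_le_mul_of_nonneg_right (le_trans ?_ (le_abs_self _)) (abs_nonneg _)
  nlinarith [sq_nonneg (b + a / 2)]

/-- The twist `σ`, which vanishes at the integers and takes the value `j` at `j + 1/2`. -/
def twist (y : ℝ) : ℝ := (y - 1 / 2) * ((1 - Real.cos (2 * Real.pi * y)) / 2)

@[fun_prop]
theorem continuous_twist : Continuous twist := by
  unfold twist
  fun_prop

theorem twist_natCast (j : ℕ) : twist j = 0 := by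
  rw [twist, mul_comm, mul_comm (2 * Real.pi), Real.cos_nat_mul_two_pi, sub_self, zero_div,
    zero_mul]

theorem twist_natCast_add_half (j : ℕ) : twist (j + 1 / 2) = j := by
  have hangle : 2 * Real.pi * (j + 1 / 2 : ℝ) = j * (2 * Real.pi) + Real.pi := by ring
  rw [twist, hangle, Real.cos_nat_mul_two_pi_add_pi]
  ring

theorem abs_twist_sub_le (a b : ℝ) :
    |twist b - twist a| ≤ (1 + 4 * |a - 1 / 2|) * |b - a| := by
  have hsplit : twist b - twist a = (1 - Real.cos (2 * Real.pi * b)) / 2 * (b - a) +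
      (a - 1 / 2) * ((Real.cos (2 * Real.pi * a) - Real.cos (2 * Real.pi * b)) / 2) := by
    unfold twist
    ring
  have hbounded : |(1 - Real.cos (2 * Real.pi * b)) / 2| ≤ 1 := by
    rw [abs_le]
    constructor <;>
      linarith [Real.neg_one_le_cos (2 * Real.pi * b), Real.cos_le_one (2 * Real.pi * b)]
  have hlipschitz :
      |(Real.cos (2 * Real.pi * a) - Real.cos (2 * Real.pi * b)) / 2| ≤ 4 * |b - a| := by
    have := Real.abs_cos_sub_cos_le (2 * Real.pi * a) (2 * Real.pi * b)
    rw [← mul_sub, abs_mul, abs_of_pos Real.two_pi_pos, abs_sub_comm a] at this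
    rw [abs_div, abs_two, div_le_iff₀ two_pos]
    nlinarith [Real.pi_le_four, abs_nonneg (b - a)]
  calc |twist b - twist a|
      ≤ 1 * |b - a| + |a - 1 / 2| * (4 * |b - a|) := by
        rw [hsplit]
        refine (abs_add_le _ _).trans ?_
        rw [abs_mul, abs_mul]
        gcongr
    _ = (1 + 4 * |a - 1 / 2|) * |b - a| := by ring

theorem mul_abs_twist_sub_le {a b C : ℝ} (ha : 1 ≤ a) (hC : |rescale b - rescale a| ≤ C) :
    a * |twist b - twist a| ≤ C := by
  have hhalf : |a - 1 / 2| ≤ a := abs_le.2 ⟨by linarith, by linarith⟩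
  calc a * |twist b - twist a|
      ≤ a * ((1 + 4 * a) * |b - a|) := by
        have := abs_twist_sub_le a b
        gcongr
        exact this.trans (by gcongr)
    _ ≤ 6 * a ^ 2 * |b - a| := by
        rw [← mul_assoc]
        exact mul_le_mul_of_nonneg_right (by nlinarith) (abs_nonneg _)
    _ ≤ C := (sq_mul_abs_sub_le_abs_rescale_sub a b).trans hC

theorem tendsto_twist_sub {α : Type*} {l : Filter α} {a b : α → ℝ} {C : ℝ}
    (ha : Tendsto a l atTop) (hC : ∀ x, |rescale (b x) - rescale (a x)| ≤ C) :
    Tendsto (fun x => twist (b x) - twist (a x)) l (𝓝 0) := by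
  refine squeeze_zero_norm' ?_ ((tendsto_const_nhds (x := C)).div_atTop ha)
  filter_upwards [ha.eventually_ge_atTop 1] with x hx
  rw [Real.norm_eq_abs, le_div_iff₀' (by linarith)]
  exact mul_abs_twist_sub_le hx (hC x)

/-- The change of coordinates `(x, y) ↦ (x - σ(y), κ(y))`. It conjugates the flow on the annulus to
the oscillator flow, and straightens the curve `x = σ(y)` to a vertical orbit. -/
def straighten : Ann ≃ₜ Circle × ℝ where
  toFun z := (AddCircle.homeomorphCircle one_ne_zero (z.1 - (twist z.2 : T1)), rescale z.2)
  invFun q := ((AddCircle.homeomorphCircle one_ne_zero).symm q.1 + (twist (rescale.symm q.2) : T1),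
    rescale.symm q.2)
  left_inv z := by
    simp only [Homeomorph.symm_apply_apply, OrderIso.symm_apply_apply, sub_add_cancel]
  right_inv q := by
    simp only [Homeomorph.apply_symm_apply, OrderIso.apply_symm_apply, add_sub_cancel_right]
  continuous_toFun := by
    have := AddCircle.continuous_mk' (1 : ℝ)
    have := rescale.continuous
    fun_prop
  continuous_invFun := by
    have := AddCircle.continuous_mk' (1 : ℝ)
    have := rescale.symm.continuous
    fun_prop

theorem straighten_apply (z : Ann) :
    straighten z = (AddCircle.toCircle (z.1 - (twist z.2 : T1)), rescale z.2) :=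
  Prod.ext (AddCircle.homeomorphCircle_apply one_ne_zero _) rfl

theorem straighten_pA_zero_natCast (j : ℕ) : straighten (pA (0, j)) = (1, rescale j) := by
  simp [straighten_apply, pA, twist_natCast]

/-- The flow on the annulus whose time-one map is the required homeomorphism. -/
def annFlow : Flow ℝ Ann := conjFlow straighten oscillatorFlow

/-- The displacement function of `annFlow`. -/
def annDisplacement (t : ℝ) (z : Ann) : ℝ :=
  turning t (straighten z) + (twist (annFlow t z).2 - twist z.2)

theorem straighten_annFlow (t : ℝ) (z : Ann) :
    straighten (annFlow t z) = oscillatorFlow t (straighten z) :=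
  apply_conjFlow _ _ _ _

theorem isDisplacement_annDisplacement : IsDisplacement annFlow annDisplacement where
  continuous := by
    have hflow : Continuous fun q : ℝ × Ann => annFlow q.1 q.2 :=
      annFlow.continuous continuous_fst continuous_snd
    have hturning : Continuous fun q : ℝ × Ann => turning q.1 (straighten q.2) := by
      fun_prop
    exact hturning.add (by fun_prop)
  zero z := by
    have hdirection : direction 0 (straighten z) = (straighten z).1 :=
      congrArg Prod.fst (oscillatorFlow.map_zero_apply _)
    rw [annDisplacement, turning_eq_zero hdirection, annFlow.map_zero_apply, sub_self, add_zero]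
  fst_eq t z := by
    have hfst : AddCircle.toCircle ((annFlow t z).1 - (twist (annFlow t z).2 : T1)) =
        direction t (straighten z) :=
      congrArg Prod.fst ((straighten_apply _).symm.trans (straighten_annFlow t z))
    have hfst_zero : AddCircle.toCircle (z.1 - (twist z.2 : T1)) = (straighten z).1 :=
      congrArg Prod.fst (straighten_apply z).symm
    have hsub : (annFlow t z).1 - (twist (annFlow t z).2 : T1) =
        (z.1 - (twist z.2 : T1)) + (turning t (straighten z) : T1) := by
      apply AddCircle.injective_toCircle one_ne_zero
      rw [hfst, AddCircle.toCircle_add, hfst_zero, toCircle_turning, mul_div_cancel]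
    rw [annDisplacement, AddCircle.coe_add, AddCircle.coe_sub, sub_eq_iff_eq_add.1 hsub]
    abel

theorem abs_annDisplacement_le (t : ℝ) (z : Ann) :
    |annDisplacement t z| ≤ (1 / 4 + |twist z.2|) + (1 / 4 + |twist (annFlow t z).2|) := by
  have hturning := abs_turning_le t (straighten z)
  have htwist := abs_sub (twist (annFlow t z).2) (twist z.2)
  exact (abs_add_le _ _).trans (by linarith)

theorem abs_rescale_annFlow_one_sub_le (z : Ann) :
    |rescale (annFlow 1 z).2 - rescale z.2| ≤ 2 := by
  have hheight : rescale (annFlow 1 z).2 = height 1 (straighten z) :=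
    congrArg Prod.snd (straighten_annFlow 1 z)
  rw [hheight]
  exact abs_height_one_sub_le (straighten z)

theorem tendsto_annFlow_one_snd :
    Tendsto (fun z => (annFlow 1 z).2) (comap Prod.snd atTop) atTop := by
  have hrescale : Tendsto (fun z => rescale (annFlow 1 z).2) (comap Prod.snd atTop) atTop := by
    refine tendsto_atTop_mono (fun z => ?_)
      (tendsto_atTop_add_const_right _ (-2) (rescale.tendsto_atTop.comp tendsto_comap))
    rw [Function.comp_apply]
    linarith [(abs_le.1 (abs_rescale_annFlow_one_sub_le z)).1]
  simpa only [Function.comp_def, OrderIso.symm_apply_apply] using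
    rescale.symm.tendsto_atTop.comp hrescale

theorem tendsto_annDisplacement_one :
    Tendsto (annDisplacement 1) (comap Prod.snd atTop) (𝓝 0) := by
  have hstraighten : Tendsto straighten (comap Prod.snd atTop) (comap Prod.snd atTop) :=
    tendsto_comap_iff.2 (rescale.tendsto_atTop.comp tendsto_comap)
  have hsum := (tendsto_turning_one_top.comp hstraighten).add
    (tendsto_twist_sub tendsto_comap abs_rescale_annFlow_one_sub_le)
  rwa [add_zero] at hsum

theorem tendsto_dist_annFlow_one_fst :
    Tendsto (fun z => dist (annFlow 1 z).1 z.1) (comap Prod.snd atTop) (𝓝 0) :=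
  squeeze_zero (fun _ => dist_nonneg)
    (fun z => isDisplacement_annDisplacement.dist_fst_le 1 z)
    (by simpa only [abs_zero] using tendsto_annDisplacement_one.abs)

theorem annFlow_one_eq_self_iff {z : Ann} :
    annFlow 1 z = z ↔ (AddCircle.toCircle z.1 : ℂ).re = 0 ∧ z.2 = 0 := by
  have hsnd : rescale z.2 = 0 ↔ z.2 = 0 := by simp [rescale_apply]
  rw [annFlow, conjFlow_eq_self_iff, oscillatorFlow_one_eq_self_iff, straighten_apply, hsnd]
  refine and_congr_left fun hz => ?_
  have htwist : twist z.2 = 0 := by rw [hz]; exact_mod_cast twist_natCast 0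
  rw [htwist, QuotientAddGroup.mk_zero, sub_zero]

theorem nonempty_fixedPoints_annFlow :
    (Function.fixedPoints (annFlow.toHomeomorph 1)).Nonempty := by
  refine ⟨((1 / 4 : ℝ), 0), annFlow_one_eq_self_iff.2 ⟨?_, rfl⟩⟩
  rw [AddCircle.toCircle_apply_mk, Circle.coe_exp, Complex.exp_ofReal_mul_I_re]
  convert Real.cos_pi_div_two using 2
  ring

theorem isCompact_fixedPoints_annFlow :
    IsCompact (Function.fixedPoints (annFlow.toHomeomorph 1)) := by
  refine (isCompact_univ.prod isCompact_singleton).of_isClosed_subset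
    (isClosed_fixedPoints (annFlow.toHomeomorph 1).continuous)
    fun z hz => ⟨mem_univ z.1, (annFlow_one_eq_self_iff.1 hz).2⟩

theorem fst_ne_zero_of_annFlow_one_eq_self {z : Ann} (hz : annFlow 1 z = z) : z.1 ≠ 0 :=
  fun hzero => by simpa [hzero] using (annFlow_one_eq_self_iff.1 hz).1

/-- The lift of `annFlow` to the plane that starts at the identity. -/
def planeFlow : Flow ℝ (ℝ × ℝ) := isDisplacement_annDisplacement.liftFlow

theorem planeFlow_zero_natCast (j : ℕ) :
    planeFlow (12 * j ^ 2 + 6 * j + 1 : ℕ) (0, j) = ((j : ℝ), (j : ℝ) + 1 / 2) := by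
  set n : ℕ := 12 * j ^ 2 + 6 * j + 1
  have hflow : oscillatorFlow n (straighten (pA (0, j))) = (1, rescale (j + 1 / 2)) := by
    rw [straighten_pA_zero_natCast, oscillatorFlow_one_left, rescale_natCast_add_half]
  have hsnd : (annFlow n (pA (0, j))).2 = j + 1 / 2 :=
    rescale.injective (congrArg Prod.snd ((straighten_annFlow _ _).trans hflow))
  have hturning : turning n (straighten (pA (0, j))) = 0 := by
    refine turning_eq_zero ((congrArg Prod.fst hflow).trans ?_)
    rw [straighten_pA_zero_natCast]
  rw [planeFlow, IsDisplacement.liftFlow_apply, annDisplacement, hturning, hsnd,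
    twist_natCast_add_half]
  simp [pA, twist_natCast]

theorem abs_iterate_planeFlow_sub_le (n : ℕ) (z : ℝ × ℝ) :
    |((planeFlow.toHomeomorph 1)^[n] z).1 - z.1| ≤ (1 / 4 + |twist (pA z).2|) +
      (1 / 4 + |twist (pA ((planeFlow.toHomeomorph 1)^[n] z)).2|) := by
  rw [iterate_toHomeomorph_one, planeFlow, IsDisplacement.liftFlow_apply, add_sub_cancel_left]
  exact abs_annDisplacement_le n (pA z)

theorem rot_planeFlow : rot (planeFlow.toHomeomorph 1) = {0} :=
  rot_eq_zero (b := fun z => 1 / 4 + |twist z.2|) (by fun_prop) abs_iterate_planeFlow_sub_le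
    (isDisplacement_annDisplacement.isLift_liftFlow 1) nonempty_fixedPoints_annFlow

theorem exists_invariantFullMeasure_annFlow (t : ℝ) :
    ∃ μ, InvariantFullMeasure (annFlow.toHomeomorph t) μ := by
  have hdense : Dense {z | ∃ T ≠ 0, annFlow T z = z} := by
    refine (dense_periodic_oscillatorFlow.preimage straighten.isOpenMap).mono ?_
    rintro z ⟨T, hT, hz⟩
    exact ⟨T, hT, conjFlow_eq_self_iff.2 hz⟩
  obtain ⟨μ, hprob, hinv, hpos⟩ := exists_invariant_measure_of_dense_periodic annFlow hdense
  exact ⟨μ, hprob, hinv t, hpos⟩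

theorem image_fixedPoints_planeFlow_subset :
    pA '' Function.fixedPoints (planeFlow.toHomeomorph 1) ⊆ {0}ᶜ ×ˢ univ := by
  rintro _ ⟨z, hz, rfl⟩
  have hfix : annFlow 1 (pA z) = pA z :=
    (isDisplacement_annDisplacement.isLift_liftFlow 1 z).symm.trans (congrArg pA hz)
  exact ⟨fst_ne_zero_of_annFlow_one_eq_self hfix, mem_univ _⟩

/-- **Proposition 5.1.** There is an irrotational measure-preserving homeomorphism
`f_bound` of the open annulus whose lifted displacement within compact sets is
unbounded as the compact sets grow, whose fixed point set behaves as in Theorem A,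
and which extends to the semi-closed annulus as the identity on the circle at `+∞`. -/
theorem exists_f_bound :
    ∃ (f : Ann ≃ₜ Ann) (fc : (ℝ × ℝ) ≃ₜ (ℝ × ℝ)) (μ : Measure Ann),
      IsotopicToId f ∧ InvariantFullMeasure f μ ∧ IsLift f fc ∧
      rot fc = {(0 : EReal)} ∧
      (∃ U : Set Ann, IsOpenTopDisk U ∧ pA '' Function.fixedPoints fc ⊆ U) ∧
      (∀ z ∈ Function.fixedPoints f,
        IsCompact (connectedComponentIn (Function.fixedPoints f) z)) ∧
      (∀ η : ℝ, 0 < η → ∀ j : ℕ, 1 ≤ j →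
        ∃ zc ∈ Set.Icc (0 : ℝ) η ×ˢ Set.Icc (j : ℝ) ((j : ℝ) + 1), ∃ n : ℕ, 1 ≤ n ∧
          (⇑fc)^[n] zc ∈ Set.Icc (j : ℝ) ((j : ℝ) + η) ×ˢ Set.Icc (j : ℝ) ((j : ℝ) + 1)) ∧
      (∀ C : ℝ, ∃ Y : ℝ, ∀ z : Ann, Y ≤ z.2 → C ≤ (f z).2) ∧
      (∀ ε : ℝ, 0 < ε → ∃ Y : ℝ, ∀ z : Ann, Y ≤ z.2 → dist (f z).1 z.1 < ε) := by
  obtain ⟨μ, hμ⟩ := exists_invariantFullMeasure_annFlow 1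
  refine ⟨annFlow.toHomeomorph 1, planeFlow.toHomeomorph 1, μ, isotopicToId_toHomeomorph _ 1, hμ,
    isDisplacement_annDisplacement.isLift_liftFlow 1, rot_planeFlow,
    ⟨_, isOpenTopDisk_compl_zero_prod_univ, image_fixedPoints_planeFlow_subset⟩,
    fun z hz => isCompact_connectedComponentIn isCompact_fixedPoints_annFlow hz,
    fun η hη j _ => ?_, fun C => ?_, fun ε hε => ?_⟩
  · refine ⟨(0, j), by simp [hη.le], 12 * j ^ 2 + 6 * j + 1, Nat.le_add_left 1 _, ?_⟩
    rw [iterate_toHomeomorph_one, planeFlow_zero_natCast]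
    norm_num [hη.le]
  · exact exists_forall_of_eventually_comap_snd (tendsto_annFlow_one_snd.eventually_ge_atTop C)
  · exact exists_forall_of_eventually_comap_snd
      (tendsto_dist_annFlow_one_fst.eventually_lt_const hε)
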